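/- Let (A,m,k) be a Noetherian local ring of Krull dimension d whose residue field k is algebraically closed of characteristic 0, and let I be an m-primary integrally closed ideal (I = Ī). If dim_k(I/I_>) = d, then *J = I for every reduction J of I. -/

import Mathlib

open Filter Polynomial

/-- An element `b` is weakly subintegral over a subset (subring) `R` of `B`:
there are `q ≥ 0` and `a_i ∈ R` (`1 ≤ i ≤ 2q+1`) with
`b^n + ∑_{i=1}^n (n choose i) a_i b^{n-i} = 0` for `q+1 ≤ n ≤ 2q+1`. -/
def WSubOver {B : Type*} [CommRing B] (R : Set B) (b : B) : Prop :=
  ∃ q : ℕ, ∃ a : ℕ → B, (∀ i, a i ∈ R) ∧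
    ∀ n, q + 1 ≤ n → n ≤ 2 * q + 1 →
      b ^ n + ∑ i ∈ Finset.Icc 1 n, (n.choose i : B) * a i * b ^ (n - i) = 0

/-- An element `b` is weakly subintegral over an ideal `I`:
there are `q ≥ 0` and `a_i ∈ I^i` with
`b^n + ∑_{i=1}^n (n choose i) a_i b^{n-i} = 0` for `q+1 ≤ n ≤ 2q+1`.
The set of such elements is the weak subintegral closure `*I`. -/
def WSubIdeal {A : Type*} [CommRing A] (I : Ideal A) (b : A) : Prop :=
  ∃ q : ℕ, ∃ a : ℕ → A, (∀ i, a i ∈ I ^ i) ∧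
    ∀ n, q + 1 ≤ n → n ≤ 2 * q + 1 →
      b ^ n + ∑ i ∈ Finset.Icc 1 n, (n.choose i : A) * a i * b ^ (n - i) = 0

/-- `a` is integral over the ideal `I`: `a^n + c_1 a^{n-1} + ⋯ + c_n = 0` with `c_i ∈ I^i`.
The set of such elements is the integral closure `Ī` of `I`. -/
def IntegralOverIdeal {A : Type*} [CommRing A] (I : Ideal A) (a : A) : Prop :=
  ∃ n : ℕ, 0 < n ∧ ∃ c : ℕ → A, (∀ i, c i ∈ I ^ i) ∧
    a ^ n + ∑ i ∈ Finset.Icc 1 n, c i * a ^ (n - i) = 0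

/-- `J` is a reduction of `I`: `J ⊆ I` and `J̄ = Ī`. -/
def IsReduction {A : Type*} [CommRing A] (J I : Ideal A) : Prop :=
  J ≤ I ∧ ∀ x, IntegralOverIdeal J x ↔ IntegralOverIdeal I x

/-- `J` is a minimal reduction of `I`. -/
def IsMinimalReduction {A : Type*} [CommRing A] (J I : Ideal A) : Prop :=
  IsReduction J I ∧ ∀ J' : Ideal A, IsReduction J' I → J' ≤ J → J' = J

/-- `ord_I(a) = max {n | a ∈ I^n}` (with value `∞` if `a ∈ ⋂ I^n`). -/
noncomputable def ordI {A : Type*} [CommRing A] (I : Ideal A) (a : A) : ℕ∞ :=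
  ⨆ (n : ℕ) (_ : a ∈ I ^ n), (n : ℕ∞)

/-- The sequence `ord_I(a^n)/n`, whose limit is the asymptotic Samuel function `v̄_I(a)`. -/
noncomputable def samuelSeq {A : Type*} [CommRing A] (I : Ideal A) (a : A) (n : ℕ) : ENNReal :=
  (ordI I (a ^ n) : ENNReal) / (n : ENNReal)

/-- `a ∈ I_>`, i.e. `v̄_I(a) > 1`, where `v̄_I(a)` is the limit of `ord_I(a^n)/n`
(this limit always exists in `[0,∞]`). -/
def MemIgt {A : Type*} [CommRing A] (I : Ideal A) (a : A) : Prop :=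
  ∃ L : ENNReal, 1 < L ∧ Filter.Tendsto (samuelSeq I a) Filter.atTop (nhds L)

/-!
Let `J` be a reduction of `I`. If `B ⊆ J` and `J ⊆ B + I_>`, then `B` is again a reduction of `I`:
elements of `I_>` are nilpotent modulo `I²t` in the Rees algebra of `I`, so `I ^ (n + 1)` is
contained in `B * I ^ n + I * I ^ (n + 1)` for large `n`, and Nakayama's lemma applies. Lifting a
minimal generating set of `(J + I_>) / I_>` gives such a `B`; it is `𝔪`-primary, so by Krull's
height theorem it has at least `dim A` generators. Hence `J` and `I` have the same image in the
vector space `I / I_>`, that is, `I = J + I_>`.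

It remains to see that `J` and `I_>` lie in `*J`. A sequence `a_i ∈ J ^ i` amounts to a functional
`φ` on `A[X]` with `φ 1 = 1` and `φ (X ^ i) = a_i`, and the equations of weak subintegrality of `b`
become `φ ((X + b) ^ n) = 0`. Precomposing `φ` with a Taylor shift by `y ∈ J` preserves
`φ (X ^ i) ∈ J ^ i`, so adding elements of `J` is harmless. If `z ∈ I_>`, then `z ^ n ∈ J ^ n` for
all `n ≥ q`, and one takes `φ (X ^ i) = z ^ i * ψ (X ^ i)`, where `ψ` is the constant coefficient
of the remainder modulo `(X + 1) ^ (q + 1)`.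
-/

section ReesRadical

variable {A : Type*} [CommRing A] {I K K₁ K₂ L L' : Ideal A}

theorem pow_succ_le_mul_pow_of_le (hK : K ≤ I) {m n : ℕ} (h : K ^ (m + 1) ≤ L * I ^ m)
    (hmn : m ≤ n) : K ^ (n + 1) ≤ L * I ^ n := by
  obtain ⟨k, rfl⟩ := Nat.exists_eq_add_of_le hmn
  calc K ^ (m + k + 1) = K ^ (m + 1) * K ^ k := by rw [← pow_add, add_right_comm]
    _ ≤ L * I ^ m * I ^ k := Ideal.mul_mono h (Ideal.pow_right_mono hK k)
    _ = L * I ^ (m + k) := by rw [mul_assoc, ← pow_add]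

theorem pow_mul_pow_le_mul_pow (hK₁ : K₁ ≤ I) (hK₂ : K₂ ≤ I) {m i j n : ℕ}
    (h : K₁ ^ (m + 1) ≤ L * I ^ m) (hi : m < i) (hij : i + j = n + 1) :
    K₁ ^ i * K₂ ^ j ≤ L * I ^ n := by
  obtain ⟨i, rfl⟩ := Nat.exists_eq_succ_of_ne_zero (Nat.ne_zero_of_lt hi)
  calc K₁ ^ (i + 1) * K₂ ^ j ≤ L * I ^ i * I ^ j :=
        Ideal.mul_mono (pow_succ_le_mul_pow_of_le hK₁ h (Nat.le_of_lt_succ hi))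
          (Ideal.pow_right_mono hK₂ j)
    _ = L * I ^ n := by rw [mul_assoc, ← pow_add]; congr 2; omega

theorem exists_sup_pow_succ_le_mul_pow (hK₁ : K₁ ≤ I) (hK₂ : K₂ ≤ I)
    (h₁ : ∃ m, K₁ ^ (m + 1) ≤ L * I ^ m) (h₂ : ∃ m, K₂ ^ (m + 1) ≤ L * I ^ m) :
    ∃ n, (K₁ ⊔ K₂) ^ (n + 1) ≤ L * I ^ n := by
  obtain ⟨m₁, h₁⟩ := h₁
  obtain ⟨m₂, h₂⟩ := h₂
  refine ⟨m₁ + m₂, ?_⟩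
  rw [← Submodule.add_eq_sup, add_pow, Ideal.sum_eq_sup, Finset.sup_le_iff]
  intro i hi
  rw [Finset.mem_range] at hi
  refine Ideal.mul_le_left.trans ?_
  rcases lt_or_ge m₁ i with hm₁ | hm₁
  · exact pow_mul_pow_le_mul_pow hK₁ hK₂ h₁ hm₁ (by omega)
  · rw [mul_comm]
    exact pow_mul_pow_le_mul_pow hK₂ hK₁ h₂ (by omega) (by omega)

theorem span_singleton_pow_le_iff_mem {x : A} {n : ℕ} :
    Ideal.span {x} ^ n ≤ L ↔ x ^ n ∈ L := by
  rw [Ideal.span_singleton_pow, Ideal.span_singleton_le_iff_mem]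

/-- The elements `x ∈ I` with `x ^ (n + 1) ∈ L * I ^ n` for some `n`: those for which `x t` is
nilpotent modulo `L t` in the Rees algebra `⨁ n, I ^ n t ^ n`. Elements of `I` integral over
`L ≤ I` are of this kind; for `L = I ^ 2` one gets the ideal `I_>`. -/
def reesRadical (I L : Ideal A) : Ideal A where
  carrier := {x | x ∈ I ∧ ∃ n, x ^ (n + 1) ∈ L * I ^ n}
  zero_mem' := ⟨I.zero_mem, 0, by simp⟩
  add_mem' := by
    rintro x y ⟨hx, hxL⟩ ⟨hy, hyL⟩
    simp only [← span_singleton_pow_le_iff_mem] at hxL hyL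
    obtain ⟨n, hn⟩ := exists_sup_pow_succ_le_mul_pow
      ((Ideal.span_singleton_le_iff_mem I).2 hx) ((Ideal.span_singleton_le_iff_mem I).2 hy) hxL hyL
    exact ⟨I.add_mem hx hy, n, hn (Ideal.pow_mem_pow (Submodule.add_mem_sup
      (Ideal.mem_span_singleton_self x) (Ideal.mem_span_singleton_self y)) _)⟩
  smul_mem' := by
    rintro c x ⟨hx, n, hn⟩
    refine ⟨I.mul_mem_left c hx, n, ?_⟩
    rw [smul_eq_mul, mul_pow]
    exact Ideal.mul_mem_left _ _ hn

theorem mem_reesRadical {x : A} :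
    x ∈ reesRadical I L ↔ x ∈ I ∧ ∃ n, x ^ (n + 1) ∈ L * I ^ n := Iff.rfl

theorem reesRadical_le : reesRadical I L ≤ I := fun _ hx => hx.1

theorem reesRadical_mono (h : L ≤ L') : reesRadical I L ≤ reesRadical I L' :=
  fun _ ⟨hx, n, hn⟩ => ⟨hx, n, Ideal.mul_mono_left h hn⟩

theorem mem_reesRadical_of_mem {x : A} (hx : x ∈ I) (hxL : x ∈ L) : x ∈ reesRadical I L :=
  ⟨hx, 0, by simpa using hxL⟩

theorem exists_pow_succ_le_mul_pow_of_le_reesRadical (hK : K.FG) (h : K ≤ reesRadical I L) :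
    ∃ n, K ^ (n + 1) ≤ L * I ^ n := by
  induction K, hK using Submodule.fg_induction with
  | singleton x =>
    obtain ⟨-, n, hn⟩ := h (Submodule.mem_span_singleton_self x)
    exact ⟨n, span_singleton_pow_le_iff_mem.2 hn⟩
  | sup K₁ K₂ _ _ ih₁ ih₂ =>
    obtain ⟨h₁, h₂⟩ := sup_le_iff.1 h
    exact exists_sup_pow_succ_le_mul_pow (h₁.trans reesRadical_le) (h₂.trans reesRadical_le)
      (ih₁ h₁) (ih₂ h₂)

end ReesRadical

section Reductions

variable {A : Type*} [CommRing A] {I J : Ideal A} {x : A}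

theorem IntegralOverIdeal.of_mem (hx : x ∈ I) : IntegralOverIdeal I x := by
  refine ⟨1, one_pos, fun i => if i = 1 then -x else 0, fun i => ?_, by simp⟩
  dsimp only
  split_ifs with h
  · simpa [h] using hx
  · exact zero_mem _

theorem IntegralOverIdeal.mono (h : J ≤ I) (hx : IntegralOverIdeal J x) :
    IntegralOverIdeal I x := by
  obtain ⟨n, hn, c, hc, hx⟩ := hx
  exact ⟨n, hn, c, fun i => Ideal.pow_right_mono h i (hc i), hx⟩

theorem pow_mul_pow_sub_le_mul_pow (hJI : J ≤ I) {i n : ℕ} (hi : 1 ≤ i) (hin : i ≤ n + 1) :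
    J ^ i * I ^ (n + 1 - i) ≤ J * I ^ n := by
  obtain ⟨i, rfl⟩ := Nat.exists_eq_add_of_le' hi
  calc J ^ (i + 1) * I ^ (n + 1 - (i + 1)) = J * (J ^ i * I ^ (n - i)) := by
        rw [pow_succ', mul_assoc, Nat.add_sub_add_right]
    _ ≤ J * (I ^ i * I ^ (n - i)) :=
        Ideal.mul_mono_right (Ideal.mul_mono_left (Ideal.pow_right_mono hJI i))
    _ = J * I ^ n := by rw [pow_mul_pow_sub I (Nat.le_of_succ_le_succ hin)]

theorem IntegralOverIdeal.mem_reesRadical (hJI : J ≤ I) (hxI : x ∈ I)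
    (hx : IntegralOverIdeal J x) : x ∈ reesRadical I J := by
  obtain ⟨n, hn, c, hc, hx⟩ := hx
  obtain ⟨n, rfl⟩ := Nat.exists_eq_add_of_le' hn
  refine ⟨hxI, n, ?_⟩
  rw [eq_neg_of_add_eq_zero_left hx]
  refine neg_mem (Ideal.sum_mem _ fun i hi => ?_)
  rw [Finset.mem_Icc] at hi
  exact pow_mul_pow_sub_le_mul_pow hJI hi.1 hi.2
    (Ideal.mul_mem_mul (hc i) (Ideal.pow_mem_pow hxI _))

theorem IsReduction.le_reesRadical (hJ : IsReduction J I) : I ≤ reesRadical I J :=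
  fun x hx => ((hJ.2 x).2 (.of_mem hx)).mem_reesRadical hJ.1 hx

theorem pow_add_le_pow_mul_pow {n : ℕ} (h : I ^ (n + 1) ≤ J * I ^ n) (k : ℕ) :
    I ^ (n + k) ≤ J ^ k * I ^ n := by
  induction k with
  | zero => simp
  | succ k ih =>
    calc I ^ (n + (k + 1)) = I * I ^ (n + k) := by rw [← add_assoc, pow_succ']
      _ ≤ I * (J ^ k * I ^ n) := Ideal.mul_mono_right ih
      _ = J ^ k * I ^ (n + 1) := by rw [mul_left_comm, ← pow_succ']
      _ ≤ J ^ k * (J * I ^ n) := Ideal.mul_mono_right h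
      _ = J ^ (k + 1) * I ^ n := by rw [pow_succ, mul_assoc]

theorem IsReduction.exists_pow_add_le (hJ : IsReduction J I) (hI : I.FG) :
    ∃ n, ∀ k, I ^ (n + k) ≤ J ^ k * I ^ n :=
  (exists_pow_succ_le_mul_pow_of_le_reesRadical hI hJ.le_reesRadical).imp
    fun _ => pow_add_le_pow_mul_pow

theorem radical_eq_of_pow_succ_le_mul_pow (hJI : J ≤ I) {n : ℕ} (h : I ^ (n + 1) ≤ J * I ^ n) :
    J.radical = I.radical := by
  refine (Ideal.radical_mono hJI).antisymm ?_
  rw [← Ideal.radical_pow I n.succ_ne_zero]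
  exact Ideal.radical_mono (h.trans Ideal.mul_le_left)

end Reductions

section IdealGt

variable {A : Type*} [CommRing A] {B I J : Ideal A} {z : A}

/-- The ideal `I_>`, encoded without the limit `v̄_I`: the elements `z ∈ I` with
`z ^ (n + 1) ∈ I ^ (n + 2)` for some `n`. -/
def idealGt (I : Ideal A) : Ideal A := reesRadical I (I ^ 2)

theorem MemIgt.mem_idealGt (h : MemIgt I z) (hz : z ∈ I) : z ∈ idealGt I := by
  obtain ⟨v, hv, hlim⟩ := h
  obtain ⟨n, hn⟩ :=
    (((tendsto_add_atTop_iff_nat 1).2 hlim).eventually (lt_mem_nhds hv)).exists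
  have hord : ((n + 1 : ℕ) : ℕ∞) < ordI I (z ^ (n + 1)) := by
    rw [samuelSeq, ENNReal.lt_div_iff_mul_lt (by simp) (by simp), one_mul] at hn
    exact_mod_cast hn
  simp only [ordI, lt_iSup_iff, Nat.cast_lt] at hord
  obtain ⟨m, hmem, hm⟩ := hord
  refine ⟨hz, n, ?_⟩
  rw [← pow_add]
  exact Ideal.pow_le_pow_right (by omega) hmem

theorem radical_mul_le_idealGt : I.radical * I ≤ idealGt I := by
  rw [Ideal.mul_le]
  rintro c ⟨k, hk⟩ z hz
  refine ⟨I.mul_mem_left c hz, k, ?_⟩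
  have hIk : I * I ^ (k + 1) = I ^ 2 * I ^ k := by ring
  rw [mul_pow, pow_succ' c, mul_assoc, ← hIk]
  exact Ideal.mul_mem_left _ _ (Ideal.mul_mem_mul hk (Ideal.pow_mem_pow hz _))

theorem eventually_pow_mem_pow_add_of_mem_idealGt (hz : z ∈ idealGt I) (k : ℕ) :
    ∀ᶠ n in atTop, z ^ n ∈ I ^ (n + k) := by
  obtain ⟨hzI, r, hr⟩ := mem_reesRadical.1 hz
  filter_upwards [eventually_ge_atTop ((r + 1) * k)] with n hn
  obtain ⟨j, rfl⟩ := Nat.exists_eq_add_of_le hn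
  have hI : (I ^ 2 * I ^ r) ^ k * I ^ j = I ^ ((r + 1) * k + j + k) := by ring
  rw [pow_add z, pow_mul, ← hI]
  exact Ideal.mul_mem_mul (Ideal.pow_mem_pow hr k) (Ideal.pow_mem_pow hzI j)

theorem IsReduction.eventually_pow_mem_of_mem_idealGt (hJ : IsReduction J I) (hI : I.FG)
    (hz : z ∈ idealGt I) : ∀ᶠ n in atTop, z ^ n ∈ J ^ n := by
  obtain ⟨k, hk⟩ := hJ.exists_pow_add_le hI
  filter_upwards [eventually_pow_mem_pow_add_of_mem_idealGt hz k] with n hn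
  rw [add_comm] at hn
  exact Ideal.mul_le_left (hk n hn)

theorem sup_idealGt_le_reesRadical (hB : B ≤ I) : B ⊔ idealGt I ≤ reesRadical I (B ⊔ I ^ 2) :=
  sup_le (fun _ hx => mem_reesRadical_of_mem (hB hx) (Ideal.mem_sup_left hx))
    (reesRadical_mono le_sup_right)

theorem IsReduction.exists_pow_succ_le_of_le_sup_idealGt (hJ : IsReduction J I) (hI : I.FG)
    (hJfg : J.FG) (hjac : I ≤ (⊥ : Ideal A).jacobson) (hB : B ≤ I) (h : J ≤ B ⊔ idealGt I) :
    ∃ n, I ^ (n + 1) ≤ B * I ^ n := by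
  obtain ⟨n, hn⟩ := hJ.exists_pow_add_le hI
  obtain ⟨m, hm⟩ :=
    exists_pow_succ_le_mul_pow_of_le_reesRadical hJfg (h.trans (sup_idealGt_le_reesRadical hB))
  refine ⟨m + n, Submodule.le_of_le_smul_of_le_jacobson_bot hI.pow hjac ?_⟩
  have hpow : I ^ 2 * I ^ (m + n) = I * I ^ (m + n + 1) := by ring
  calc I ^ (m + n + 1) = I ^ (n + (m + 1)) := by ring
    _ ≤ J ^ (m + 1) * I ^ n := hn _
    _ ≤ (B ⊔ I ^ 2) * I ^ m * I ^ n := Ideal.mul_mono_left hm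
    _ = B * I ^ (m + n) ⊔ I • I ^ (m + n + 1) := by
        rw [mul_assoc, ← pow_add, Ideal.sup_mul, hpow, smul_eq_mul]

end IdealGt

section SpanFinrank

theorem exists_le_map_eq_and_spanFinrank_le {R M N : Type*} [Semiring R]
    [AddCommMonoid M] [Module R M] [AddCommMonoid N] [Module R N] (f : M →ₗ[R] N)
    (P : Submodule R M) (hP : (P.map f).FG) :
    ∃ Q ≤ P, Q.map f = P.map f ∧ Q.spanFinrank ≤ (P.map f).spanFinrank := by
  obtain ⟨s, hs, hspan⟩ := hP.exists_span_finset_card_eq_spanFinrank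
  have hsurj : Set.SurjOn f P s := fun y hy =>
    (hspan ▸ Submodule.subset_span hy : y ∈ P.map f)
  obtain ⟨t, htP, htinj, htim⟩ := hsurj.exists_subset_injOn_image_eq
  have ht : t.Finite := (htim ▸ s.finite_toSet).of_finite_image htinj
  refine ⟨Submodule.span R t, Submodule.span_le.2 htP, by rw [Submodule.map_span, htim, hspan], ?_⟩
  calc (Submodule.span R t).spanFinrank ≤ t.ncard :=
        Submodule.spanFinrank_span_le_ncard_of_finite ht
    _ = (P.map f).spanFinrank := by
        rw [← hs, ← htinj.ncard_image, htim, Set.ncard_coe_finset]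

theorem spanFinrank_map_mkQ_le_of_sub_sum_mem {R M ι : Type*} [Ring R] [AddCommGroup M] [Module R M]
    [Fintype ι] {P E : Submodule R M} {a : ι → M} (ha : ∀ i, a i ∈ P)
    (h : ∀ b ∈ P, ∃ c : ι → R, b - ∑ i, c i • a i ∈ E) :
    (P.map E.mkQ).spanFinrank ≤ Fintype.card ι := by
  have hspan : P.map E.mkQ = (Submodule.span R (Set.range a)).map E.mkQ := by
    refine le_antisymm ?_ (Submodule.map_mono (Submodule.span_le.2 (Set.range_subset_iff.2 ha)))
    rw [Submodule.map_le_iff_le_comap, Submodule.comap_map_mkQ]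
    intro b hb
    obtain ⟨c, hc⟩ := h b hb
    rw [← sub_add_cancel b (∑ i, c i • a i)]
    exact Submodule.add_mem_sup hc
      (Submodule.sum_smul_mem _ c fun i _ => Submodule.subset_span ⟨i, rfl⟩)
  have hfin := Set.finite_range a
  calc (P.map E.mkQ).spanFinrank ≤ (Submodule.span R (Set.range a)).spanFinrank := by
        rw [hspan]
        exact Submodule.spanFinrank_map_le_of_fg _ (Submodule.fg_span hfin)
    _ ≤ (Set.range a).ncard := Submodule.spanFinrank_span_le_ncard_of_finite hfin
    _ ≤ Fintype.card ι := by simpa using Finite.card_range_le a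

variable {R M : Type*} [CommRing R] [AddCommGroup M] [Module R M]

theorem eq_top_of_spanFinrank_le {𝔪 : Ideal R} [𝔪.IsMaximal] [Module.Finite R M]
    (hM : Module.IsTorsionBySet R M 𝔪) {P : Submodule R M}
    (h : (⊤ : Submodule R M).spanFinrank ≤ P.spanFinrank) : P = ⊤ := by
  let _ : Field (R ⧸ 𝔪) := Ideal.Quotient.field 𝔪
  let _ : Module (R ⧸ 𝔪) M := hM.module
  -- the identity map, carrying `R`-submodules to subspaces over the residue field
  let f : M →ₛₗ[Ideal.Quotient.mk 𝔪] M := hM.semilinearMap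
  have hf : Function.Injective f := fun _ _ => id
  have finrank_map (Q : Submodule R M) : Module.finrank (R ⧸ 𝔪) (Q.map f) = Q.spanFinrank := by
    rw [Module.finrank_eq_spanFinrank_of_free, Submodule.spanFinrank_top,
      Submodule.spanFinrank_map_eq_of_injective f hf]
  have : Module.Finite (R ⧸ 𝔪) ((⊤ : Submodule R M).map f) :=
    Module.Finite.of_fg (Module.Finite.fg_top.map f)
  refine Submodule.map_injective_of_injective hf
    (Submodule.eq_of_le_of_finrank_le (Submodule.map_mono le_top) ?_)
  rwa [finrank_map, finrank_map]

theorem eq_of_le_of_spanFinrank_le {𝔪 : Ideal R} [𝔪.IsMaximal] {P Q : Submodule R M}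
    (hQ : Q.FG) (h𝔪Q : 𝔪 • Q = ⊥) (hPQ : P ≤ Q) (h : Q.spanFinrank ≤ P.spanFinrank) : P = Q := by
  have : Module.Finite R Q := Module.Finite.of_fg hQ
  have htors : Module.IsTorsionBySet R Q 𝔪 :=
    (Module.isTorsionBySet_iff_subset_annihilator R Q).2 (Submodule.le_annihilator_iff.2 h𝔪Q)
  have hmap : (P.submoduleOf Q).map Q.subtype = P := by
    simpa [Submodule.submoduleOf, Submodule.map_comap_subtype] using hPQ
  refine hPQ.antisymm (Submodule.submoduleOf_eq_top.1 (eq_top_of_spanFinrank_le htors ?_))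
  rwa [Submodule.spanFinrank_top,
    ← Submodule.spanFinrank_map_eq_of_injective Q.subtype Q.subtype_injective, hmap]

end SpanFinrank

section Dimension

variable {A : Type*} [CommRing A] [IsNoetherianRing A] [IsLocalRing A] {B I J : Ideal A}

open IsLocalRing

theorem ringKrullDim_le_spanFinrank_of_radical_eq (hB : B.radical = maximalIdeal A) :
    ringKrullDim A ≤ B.spanFinrank := by
  have hB_ne_top : B ≠ ⊤ := fun h =>
    (maximalIdeal.isMaximal A).ne_top (by rw [← hB, h, Ideal.radical_top])
  have hheight : B.height = (maximalIdeal A).height := by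
    rw [Ideal.height_eq_inf_minimalPrimes, ← Ideal.radical_minimalPrimes, hB,
      Ideal.minimalPrimes_eq_subsingleton_self]
    simp
  rw [← maximalIdeal_height_eq_ringKrullDim, ← hheight]
  exact_mod_cast B.height_le_spanFinrank hB_ne_top

theorem IsReduction.ringKrullDim_le_spanFinrank_map_mkQ (hJ : IsReduction J I)
    (hI : I.radical = maximalIdeal A) :
    ringKrullDim A ≤ (Submodule.map (idealGt I).mkQ J).spanFinrank := by
  obtain ⟨B, hBJ, hmap, hrank⟩ := exists_le_map_eq_and_spanFinrank_le (idealGt I).mkQ J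
    (Submodule.FG.map _ J.fg_of_isNoetherianRing)
  have hJB : J ≤ B ⊔ idealGt I := by
    rw [sup_comm, ← Submodule.comap_map_mkQ, hmap]
    exact Submodule.le_comap_map _ _
  have hjac : I ≤ (⊥ : Ideal A).jacobson :=
    Ideal.le_radical.trans (hI.trans_le (maximalIdeal_le_jacobson ⊥))
  obtain ⟨n, hn⟩ := hJ.exists_pow_succ_le_of_le_sup_idealGt I.fg_of_isNoetherianRing
    J.fg_of_isNoetherianRing hjac (hBJ.trans hJ.1) hJB
  calc ringKrullDim A ≤ B.spanFinrank := ringKrullDim_le_spanFinrank_of_radical_eq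
        ((radical_eq_of_pow_succ_le_mul_pow (hBJ.trans hJ.1) hn).trans hI)
    _ ≤ (Submodule.map (idealGt I).mkQ J).spanFinrank := by exact_mod_cast hrank

theorem IsReduction.le_sup_idealGt (hJ : IsReduction J I) (hI : I.radical = maximalIdeal A)
    (hdim : (Submodule.map (idealGt I).mkQ I).spanFinrank ≤ ringKrullDim A) :
    I ≤ J ⊔ idealGt I := by
  have hsmul : maximalIdeal A • Submodule.map (idealGt I).mkQ I = ⊥ := by
    rw [← Submodule.map_smul'', ← LinearMap.le_ker_iff_map, Submodule.ker_mkQ, ← hI]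
    exact radical_mul_le_idealGt
  have hmap : Submodule.map (idealGt I).mkQ J = Submodule.map (idealGt I).mkQ I :=
    eq_of_le_of_spanFinrank_le (Submodule.FG.map _ I.fg_of_isNoetherianRing) hsmul
      (Submodule.map_mono hJ.1)
      (by exact_mod_cast hdim.trans (hJ.ringKrullDim_le_spanFinrank_map_mkQ hI))
  rw [sup_comm, ← Submodule.comap_map_mkQ, hmap]
  exact Submodule.le_comap_map _ _

end Dimension

section WeakSubintegrality

variable {A : Type*} [CommRing A] {J : Ideal A} {y z : A}

theorem linearMap_X_add_C_pow (φ : A[X] →ₗ[A] A) (hφ : φ 1 = 1) (b : A) (n : ℕ) :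
    φ ((X + C b) ^ n) =
      b ^ n + ∑ i ∈ Finset.Icc 1 n, (n.choose i : A) * φ (X ^ i) * b ^ (n - i) := by
  have hterm (i : ℕ) : φ (X ^ i * C b ^ (n - i) * (n.choose i : A[X])) =
      (n.choose i : A) * φ (X ^ i) * b ^ (n - i) := by
    have : X ^ i * C b ^ (n - i) * (n.choose i : A[X]) =
        ((n.choose i : A) * b ^ (n - i)) • X ^ i := by
      rw [smul_eq_C_mul, C_mul, C_pow, C_eq_natCast]
      ring
    rw [this, map_smul, smul_eq_mul]
    ring
  rw [add_pow, map_sum, Finset.sum_congr rfl fun i _ => hterm i, Finset.range_eq_Ico,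
    Finset.sum_eq_sum_Ico_succ_bot n.succ_pos]
  simp only [Nat.choose_zero_right, Nat.cast_one, one_mul, pow_zero, hφ, Nat.sub_zero]
  rfl

theorem wSubIdeal_iff_exists_linearMap :
    WSubIdeal J z ↔ ∃ q : ℕ, ∃ φ : A[X] →ₗ[A] A, φ 1 = 1 ∧ (∀ i, φ (X ^ i) ∈ J ^ i) ∧
      ∀ n, q + 1 ≤ n → n ≤ 2 * q + 1 → φ ((X + C z) ^ n) = 0 := by
  constructor
  · rintro ⟨q, a, ha, h⟩
    let φ : A[X] →ₗ[A] A := (basisMonomials A).constr A fun i => if i = 0 then 1 else a i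
    have hφ (i : ℕ) : φ (X ^ i) = if i = 0 then 1 else a i := by
      simpa [X_pow_eq_monomial] using
        (basisMonomials A).constr_basis A (fun i => if i = 0 then 1 else a i) i
    have hφ1 : φ 1 = 1 := by simpa using hφ 0
    refine ⟨q, φ, hφ1, fun i => ?_, fun n hn hn' => ?_⟩
    · rcases eq_or_ne i 0 with rfl | hi
      · simp
      · simpa [hφ, hi] using ha i
    · rw [linearMap_X_add_C_pow φ hφ1, ← h n hn hn']
      congr 1
      refine Finset.sum_congr rfl fun i hi => ?_
      rw [hφ, if_neg (Nat.one_le_iff_ne_zero.1 (Finset.mem_Icc.1 hi).1)]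
  · rintro ⟨q, φ, hφ1, hφ, h⟩
    exact ⟨q, fun i => φ (X ^ i), hφ, fun n hn hn' => by
      rw [← linearMap_X_add_C_pow φ hφ1, h n hn hn']⟩

theorem linearMap_X_add_C_pow_mem {φ : A[X] →ₗ[A] A} (hφ1 : φ 1 = 1)
    (hφ : ∀ i, φ (X ^ i) ∈ J ^ i) (hy : y ∈ J) (n : ℕ) : φ ((X + C y) ^ n) ∈ J ^ n := by
  rw [linearMap_X_add_C_pow φ hφ1]
  refine add_mem (Ideal.pow_mem_pow hy n) (Ideal.sum_mem _ fun i hi => ?_)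
  rw [mul_assoc, ← pow_mul_pow_sub J (Finset.mem_Icc.1 hi).2]
  exact Ideal.mul_mem_left _ _ (Ideal.mul_mem_mul (hφ i) (Ideal.pow_mem_pow hy _))

theorem WSubIdeal.add_mem (hz : WSubIdeal J z) (hy : y ∈ J) : WSubIdeal J (z + y) := by
  rw [wSubIdeal_iff_exists_linearMap] at hz ⊢
  obtain ⟨q, φ, hφ1, hφ, h⟩ := hz
  refine ⟨q, φ ∘ₗ taylor (-y), by simpa using hφ1, fun i => ?_, fun n hn hn' => ?_⟩
  · simpa using linearMap_X_add_C_pow_mem hφ1 hφ (neg_mem hy) i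
  · have hshift : taylor (-y) (X + C (z + y)) = X + C z := by
      rw [map_add, taylor_X, taylor_C, add_assoc, ← C_add, neg_add_cancel_comm_assoc]
    rw [LinearMap.comp_apply, taylor_pow, hshift, h n hn hn']

variable (A) in
theorem exists_linearMap_X_add_one_pow_eq_zero (q : ℕ) :
    ∃ ψ : A[X] →ₗ[A] A, ψ 1 = 1 ∧ (∀ i, i ≠ 0 → i ≤ q → ψ (X ^ i) = 0) ∧
      ∀ n, q < n → ψ ((X + 1) ^ n) = 0 := by
  nontriviality A
  have hmonic : ((X + 1 : A[X]) ^ (q + 1)).Monic := (monic_X_add_C (1 : A)).pow _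
  have hmod {i : ℕ} (hi : i ≤ q) : (X ^ i : A[X]) %ₘ (X + 1) ^ (q + 1) = X ^ i := by
    rw [modByMonic_eq_self_iff hmonic]
    refine degree_lt_degree ?_
    rw [natDegree_X_pow, ← C_1, (monic_X_add_C (1 : A)).natDegree_pow, natDegree_X_add_C]
    omega
  refine ⟨lcoeff A 0 ∘ₗ modByMonicHom ((X + 1) ^ (q + 1)), ?_, fun i hi hiq => ?_, fun n hn => ?_⟩
  · simpa using congrArg (coeff · 0) (hmod q.zero_le)
  · simpa [modByMonicHom_apply, hmod hiq, coeff_X_pow] using hi.symm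
  · have hzero := (modByMonic_eq_zero_iff_dvd hmonic).2 (pow_dvd_pow (X + 1 : A[X]) hn)
    simp [modByMonicHom_apply, hzero]

theorem WSubIdeal.of_eventually_pow_mem (h : ∀ᶠ n in atTop, z ^ n ∈ J ^ n) : WSubIdeal J z := by
  obtain ⟨q, hq⟩ := eventually_atTop.1 h
  obtain ⟨ψ, hψ1, hψ, hψpow⟩ := exists_linearMap_X_add_one_pow_eq_zero A q
  let φ : A[X] →ₗ[A] A := ψ ∘ₗ (aeval (C z * X : A[X])).toLinearMap
  refine wSubIdeal_iff_exists_linearMap.2 ⟨q, φ, by simpa [φ] using hψ1, fun i => ?_, ?_⟩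
  · have hφ : φ (X ^ i) = z ^ i * ψ (X ^ i) := by
      rw [← smul_eq_mul, ← map_smul, smul_eq_C_mul, C_pow, ← mul_pow]
      simp [φ]
    rw [hφ]
    rcases eq_or_ne i 0 with rfl | hi
    · simp
    · rcases le_or_gt i q with hiq | hiq
      · simp [hψ i hi hiq]
      · exact Ideal.mul_mem_right _ _ (hq i hiq.le)
  · intro n hn _
    have hφ : φ ((X + C z) ^ n) = z ^ n * ψ ((X + 1) ^ n) := by
      rw [← smul_eq_mul, ← map_smul, smul_eq_C_mul, C_pow, ← mul_pow, mul_add, mul_one]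
      simp [φ]
    rw [hφ, hψpow n hn, mul_zero]

theorem WSubIdeal.integralOverIdeal (hz : WSubIdeal J z) : IntegralOverIdeal J z := by
  obtain ⟨q, a, ha, h⟩ := hz
  exact ⟨q + 1, q.succ_pos, fun i => ((q + 1).choose i : A) * a i,
    fun i => Ideal.mul_mem_left _ _ (ha i), h (q + 1) le_rfl (by omega)⟩

end WeakSubintegrality

theorem weakSubintegralClosure_eq_of_dim_eq_general {A : Type*} [CommRing A] [IsNoetherianRing A]
    [IsLocalRing A] (d : ℕ) (hd : d ≤ ringKrullDim A)
    (I : Ideal A) (hIm : I.radical = IsLocalRing.maximalIdeal A)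
    (hIcl : ∀ x : A, IntegralOverIdeal I x → x ∈ I)
    (a : Fin d → A) (ha : ∀ i, a i ∈ I)
    (hspan : ∀ b ∈ I, ∃ c : Fin d → A, MemIgt I (b - ∑ i, c i * a i)) :
    ∀ J : Ideal A, IsReduction J I → ∀ x : A, WSubIdeal J x ↔ x ∈ I := by
  intro J hJ x
  refine ⟨fun hx => hIcl x (hx.integralOverIdeal.mono hJ.1), fun hx => ?_⟩
  have hrank : (Submodule.map (idealGt I).mkQ I).spanFinrank ≤ d := by
    rw [← Fintype.card_fin d]
    exact spanFinrank_map_mkQ_le_of_sub_sum_mem ha fun b hb => (hspan b hb).imp fun c hc =>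
      hc.mem_idealGt (sub_mem hb (Ideal.sum_mem _ fun i _ => I.mul_mem_left _ (ha i)))
  have hI : I ≤ J ⊔ idealGt I := hJ.le_sup_idealGt hIm ((Nat.cast_le.2 hrank).trans hd)
  obtain ⟨y, hy, z, hz, rfl⟩ := Submodule.mem_sup.1 (hI hx)
  rw [add_comm]
  exact (WSubIdeal.of_eventually_pow_mem
    (hJ.eventually_pow_mem_of_mem_idealGt I.fg_of_isNoetherianRing hz)).add_mem hy

/-- Corollary 4.15(1): let `(A,m,k)` be a Noetherian local ring of Krull
dimension `d` with `k` algebraically closed of characteristic 0, and let `I` be an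
`m`-primary integrally closed ideal.  If `dim_k(I/I_>) = d` (expressed by the existence of
`d` elements of `I` whose images form a `k`-basis of `I/I_>`), then `*J = I` for every
reduction `J` of `I`. -/
theorem weakSubintegralClosure_eq_of_dim_eq {A : Type*} [CommRing A] [IsNoetherianRing A]
    [IsLocalRing A]
    [IsAlgClosed (IsLocalRing.ResidueField A)] [CharZero (IsLocalRing.ResidueField A)]
    (d : ℕ) (hd : ringKrullDim A = d)
    (I : Ideal A) (hIm : I.radical = IsLocalRing.maximalIdeal A)
    (hIcl : ∀ x : A, IntegralOverIdeal I x → x ∈ I)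
    (a : Fin d → A) (ha : ∀ i, a i ∈ I)
    (hind : ∀ c : Fin d → A, MemIgt I (∑ i, c i * a i) →
      ∀ i, c i ∈ IsLocalRing.maximalIdeal A)
    (hspan : ∀ b ∈ I, ∃ c : Fin d → A, MemIgt I (b - ∑ i, c i * a i)) :
    ∀ J : Ideal A, IsReduction J I → ∀ x : A, WSubIdeal J x ↔ x ∈ I :=
  weakSubintegralClosure_eq_of_dim_eq_general d hd.ge I hIm hIcl a ha hspan
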